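/- Suppose 1/s₁ + 1/s₂ < 1 and set k₁(a) = ⌊2k(a)/3⌋. Then lim_{a→0⁺} W_a^{k₁(a)}(1/2) = 1/2. -/

import Mathlib

open MeasureTheory Filter Topology

/-- The W-like map `W_a` with parameters `s₁ s₂ p q r` and perturbation `a`. -/
noncomputable def Wmap (s₁ s₂ p q r a : ℝ) (x : ℝ) : ℝ :=
  if x < 1/2 - (1/2 + r*a)/(s₁ + p*a) then
    1 - (2*(s₁ + p*a)/(s₁ - 1 + p*a - 2*r*a)) * x
  else if x < 1/2 then
    (s₁ + p*a)*(x - 1/2) + 1/2 + r*a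
  else if x < 1/2 + (1/2 + r*a)/(s₂ + q*a) then
    -(s₂ + q*a)*(x - 1/2) + 1/2 + r*a
  else
    1 + (2*(s₂ + q*a)/(s₂ - 1 + q*a - 2*r*a)) * (x - 1)

/-- `k(a)`: the first iterate `j ≥ 1` at which the trajectory of `1/2` under `W_a`
drops below `1/2 − (1/2+ra)/(s₁+pa)`. -/
noncomputable def kIndex (s₁ s₂ p q r a : ℝ) : ℕ :=
  sInf {j : ℕ | 1 ≤ j ∧
    (Wmap s₁ s₂ p q r a)^[j] (1/2) ≤ 1/2 - (1/2 + r*a)/(s₁ + p*a)}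

/-- `k₁(a) = ⌊2k(a)/3⌋`, the integer part of `2k(a)/3`. -/
noncomputable def kIndex1 (s₁ s₂ p q r a : ℝ) : ℕ :=
  2 * kIndex s₁ s₂ p q r a / 3

/-!
Write `σ = s₁ + pa`, `τ = s₂ + qa`, `ρ = ra`. The orbit of `1/2` starts
`1/2 ↦ 1/2 + ρ ↦ 1/2 + ρ - τρ`, and `1/σ + 1/τ ≤ 1` says that the last point lies at a distance
`d ≥ 0` below the fixed point `c` of the second branch. Until it leaves that branch the orbit is
repelled from `c` at the rate `σ`, so the iterate `m + 2` is `c - d σ^m`. All iterates up to time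
`k` are nonnegative, so `d σ^(k-2) ≤ 1`; hence at a time `n ≤ θ k` with `θ < 1` the distance to `c`
is at most `d^(1-θ)`. Finally `c → 1/2` and `d → 0` as `a → 0⁺`.
-/

theorem lt_of_cast_le_mul_cast {R : Type*} [Semiring R] [LinearOrder R] [IsStrictOrderedRing R]
    {θ : R} {n k : ℕ} (hn : 0 < n) (hθ : θ < 1) (h : (n : R) ≤ θ * k) : n < k := by
  have hk : 0 < k := Nat.pos_of_ne_zero fun hk => by simp [hk, hn.ne'] at h
  exact_mod_cast h.trans_lt (mul_lt_of_lt_one_left (Nat.cast_pos.2 hk) hθ)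

theorem mul_pow_le_rpow_one_sub_of_mul_pow_le_one {d σ θ : ℝ} {m n : ℕ} (hd : 0 ≤ d) (hσ : 1 ≤ σ)
    (hθ : 0 ≤ θ) (hnm : (n : ℝ) ≤ θ * m) (hm : d * σ ^ m ≤ 1) : d * σ ^ n ≤ d ^ (1 - θ) := by
  have hσ₀ : 0 ≤ σ := zero_le_one.trans hσ
  have hσpow : σ ^ n ≤ (σ ^ m) ^ θ := by
    rw [← Real.rpow_natCast, ← Real.rpow_natCast, ← Real.rpow_mul hσ₀, mul_comm (m : ℝ)]
    exact Real.rpow_le_rpow_of_exponent_le hσ hnm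
  have hdsplit : d = d ^ (1 - θ) * d ^ θ := by
    rw [← Real.rpow_add' hd (by simp), sub_add_cancel, Real.rpow_one]
  calc d * σ ^ n ≤ d * (σ ^ m) ^ θ := by gcongr
    _ = d ^ (1 - θ) * (d * σ ^ m) ^ θ := by
      rw [Real.mul_rpow hd (by positivity), ← mul_assoc, ← hdsplit]
    _ ≤ d ^ (1 - θ) :=
      mul_le_of_le_one_right (by positivity) (Real.rpow_le_one (by positivity) hm hθ)

theorem iterate_eq_sub_pow_mul_of_affine_on_Icc {R : Type*} [CommRing R] [PartialOrder R]
    [IsOrderedRing R] {f : R → R} {b c σ x : R} {n : ℕ} (hσ : 0 ≤ σ)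
    (hf : ∀ y ∈ Set.Icc b c, f y = c - σ * (c - y)) (hx : x ≤ c)
    (hb : ∀ j < n, b ≤ f^[j] x) : f^[n] x = c - σ ^ n * (c - x) := by
  induction n with
  | zero => simp
  | succ n ih =>
    have hn : f^[n] x = c - σ ^ n * (c - x) := ih fun j hj => hb j (hj.trans n.lt_succ_self)
    have hle : f^[n] x ≤ c := by
      rw [hn]
      exact sub_le_self c (mul_nonneg (pow_nonneg hσ n) (sub_nonneg.2 hx))
    rw [Function.iterate_succ_apply', hf _ ⟨hb n n.lt_succ_self, hle⟩, hn]
    ring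

section Orbit

variable {s₁ s₂ p q r a x : ℝ}

/-- The fixed point of the second (increasing) branch of `W_a`. -/
noncomputable def leftFixedPoint (s₁ p r a : ℝ) : ℝ :=
  1 / 2 - r * a / (s₁ + p * a - 1)

/-- The signed distance from `W_a^2(1/2)` up to `leftFixedPoint`, as the closed formula valid for
small `a > 0`. -/
noncomputable def escapeGap (s₁ s₂ p q r a : ℝ) : ℝ :=
  r * a * (s₂ + q * a - (s₁ + p * a) / (s₁ + p * a - 1))

/-- The conditions on `W_a` under which the orbit of `1/2` follows the third branch for two steps
and then lies, weakly, below `leftFixedPoint`. -/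
structure EscapeRegime (s₁ s₂ p q r a : ℝ) : Prop where
  one_lt_leftSlope : 1 < s₁ + p * a
  rightSlope_pos : 0 < s₂ + q * a
  shift_pos : 0 < r * a
  one_div_add_one_div_le : 1 / (s₁ + p * a) + 1 / (s₂ + q * a) ≤ 1
  shift_lt : r * a < (1 / 2 + r * a) / (s₂ + q * a)

theorem leftFixedPoint_lt_half (hσ : 1 < s₁ + p * a) (hρ : 0 < r * a) :
    leftFixedPoint s₁ p r a < 1 / 2 :=
  sub_lt_self _ (div_pos hρ (sub_pos.2 hσ))

theorem Wmap_of_le_of_lt_half (hb : 1 / 2 - (1 / 2 + r * a) / (s₁ + p * a) ≤ x) (hx : x < 1 / 2) :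
    Wmap s₁ s₂ p q r a x = (s₁ + p * a) * (x - 1 / 2) + 1 / 2 + r * a := by
  rw [Wmap, if_neg hb.not_gt, if_pos hx]

theorem Wmap_of_half_le_of_lt (hσ : 0 < s₁ + p * a) (hρ : 0 ≤ r * a) (hx : 1 / 2 ≤ x)
    (hxb : x < 1 / 2 + (1 / 2 + r * a) / (s₂ + q * a)) :
    Wmap s₁ s₂ p q r a x = -(s₂ + q * a) * (x - 1 / 2) + 1 / 2 + r * a := by
  have hpos : 0 < (1 / 2 + r * a) / (s₁ + p * a) := by positivity
  rw [Wmap, if_neg (by linarith), if_neg hx.not_gt, if_pos hxb]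

theorem Wmap_nonneg_of_le_of_lt_half (hσ : 0 < s₁ + p * a)
    (hb : 1 / 2 - (1 / 2 + r * a) / (s₁ + p * a) ≤ x) (hx : x < 1 / 2) :
    0 ≤ Wmap s₁ s₂ p q r a x := by
  have hmul : (1 / 2 - x) * (s₁ + p * a) ≤ 1 / 2 + r * a := (le_div_iff₀ hσ).1 (by linarith)
  rw [Wmap_of_le_of_lt_half hb hx]
  linarith

theorem Wmap_eq_leftFixedPoint_sub (hσ : 1 < s₁ + p * a)
    (hb : 1 / 2 - (1 / 2 + r * a) / (s₁ + p * a) ≤ x) (hx : x < 1 / 2) :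
    Wmap s₁ s₂ p q r a x =
      leftFixedPoint s₁ p r a - (s₁ + p * a) * (leftFixedPoint s₁ p r a - x) := by
  have hne : s₁ + p * a - 1 ≠ 0 := by linarith
  rw [Wmap_of_le_of_lt_half hb hx, leftFixedPoint]
  field_simp
  ring

theorem Wmap_half (hσ : 0 < s₁ + p * a) (hτ : 0 < s₂ + q * a) (hρ : 0 ≤ r * a) :
    Wmap s₁ s₂ p q r a (1 / 2) = 1 / 2 + r * a := by
  rw [Wmap_of_half_le_of_lt hσ hρ le_rfl (lt_add_of_pos_right _ (by positivity))]
  ring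

theorem Wmap_iterate_two_half (hσ : 1 < s₁ + p * a) (hτ : 0 < s₂ + q * a) (hρ : 0 ≤ r * a)
    (hsmall : r * a < (1 / 2 + r * a) / (s₂ + q * a)) :
    (Wmap s₁ s₂ p q r a)^[2] (1 / 2) = leftFixedPoint s₁ p r a - escapeGap s₁ s₂ p q r a := by
  have hσ₀ : 0 < s₁ + p * a := zero_lt_one.trans hσ
  have hne : s₁ + p * a - 1 ≠ 0 := by linarith
  rw [Function.iterate_succ_apply', Function.iterate_one, Wmap_half hσ₀ hτ hρ,
    Wmap_of_half_le_of_lt hσ₀ hρ (by linarith) (by linarith), leftFixedPoint, escapeGap]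
  generalize s₁ + p * a = σ at hne
  field_simp
  ring

theorem lt_iterate_of_lt_kIndex {j : ℕ} (hj : 1 ≤ j) (hjk : j < kIndex s₁ s₂ p q r a) :
    1 / 2 - (1 / 2 + r * a) / (s₁ + p * a) < (Wmap s₁ s₂ p q r a)^[j] (1 / 2) :=
  not_le.1 fun hle => Nat.notMem_of_lt_sInf hjk ⟨hj, hle⟩

theorem kIndex1_le_two_thirds_mul_kIndex :
    (kIndex1 s₁ s₂ p q r a : ℝ) ≤ 2 / 3 * kIndex s₁ s₂ p q r a :=
  Nat.cast_div_le.trans_eq (by push_cast; ring)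

namespace EscapeRegime

variable {m n : ℕ} {θ : ℝ}

theorem escapeGap_nonneg (h : EscapeRegime s₁ s₂ p q r a) : 0 ≤ escapeGap s₁ s₂ p q r a := by
  obtain ⟨hσ, hτ, hρ, hsum, -⟩ := h
  have hmul : (s₂ + q * a) + (s₁ + p * a) ≤ (s₁ + p * a) * (s₂ + q * a) := by
    rwa [div_add_div _ _ (by linarith) hτ.ne', div_le_one (by positivity), one_mul, mul_one] at hsum
  refine mul_nonneg hρ.le (sub_nonneg.2 ((div_le_iff₀ (by linarith)).2 ?_))
  linarith

theorem iterate_add_two_half (h : EscapeRegime s₁ s₂ p q r a)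
    (hm : m + 2 ≤ kIndex s₁ s₂ p q r a) :
    (Wmap s₁ s₂ p q r a)^[m + 2] (1 / 2) =
      leftFixedPoint s₁ p r a - escapeGap s₁ s₂ p q r a * (s₁ + p * a) ^ m := by
  have hσ := h.one_lt_leftSlope
  have hfix := leftFixedPoint_lt_half hσ h.shift_pos
  have hstart := Wmap_iterate_two_half hσ h.rightSlope_pos h.shift_pos.le h.shift_lt
  have hbranch : ∀ j < m, 1 / 2 - (1 / 2 + r * a) / (s₁ + p * a) ≤
      (Wmap s₁ s₂ p q r a)^[j] ((Wmap s₁ s₂ p q r a)^[2] (1 / 2)) := fun j hj => by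
    rw [← Function.iterate_add_apply]
    exact (lt_iterate_of_lt_kIndex (by omega) (by omega)).le
  have haffine := iterate_eq_sub_pow_mul_of_affine_on_Icc (zero_le_one.trans hσ.le)
    (fun y hy => Wmap_eq_leftFixedPoint_sub hσ hy.1 (hy.2.trans_lt hfix))
    (hstart.trans_le (sub_le_self _ h.escapeGap_nonneg)) hbranch
  rw [Function.iterate_add_apply, haffine, hstart, sub_sub_cancel, mul_comm]

theorem escapeGap_mul_pow_nonneg (h : EscapeRegime s₁ s₂ p q r a) (m : ℕ) :
    0 ≤ escapeGap s₁ s₂ p q r a * (s₁ + p * a) ^ m :=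
  mul_nonneg h.escapeGap_nonneg (pow_nonneg (zero_le_one.trans h.one_lt_leftSlope.le) m)

theorem escapeGap_mul_pow_le_one (h : EscapeRegime s₁ s₂ p q r a)
    (hm : m + 3 ≤ kIndex s₁ s₂ p q r a) :
    escapeGap s₁ s₂ p q r a * (s₁ + p * a) ^ (m + 1) ≤ 1 := by
  have hfix := leftFixedPoint_lt_half h.one_lt_leftSlope h.shift_pos
  have hbelow : (Wmap s₁ s₂ p q r a)^[m + 2] (1 / 2) < 1 / 2 := by
    rw [h.iterate_add_two_half (by omega)]
    exact (sub_le_self _ (h.escapeGap_mul_pow_nonneg m)).trans_lt hfix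
  have hnonneg : 0 ≤ (Wmap s₁ s₂ p q r a)^[m + 3] (1 / 2) := by
    rw [Function.iterate_succ_apply']
    exact Wmap_nonneg_of_le_of_lt_half (zero_lt_one.trans h.one_lt_leftSlope)
      (lt_iterate_of_lt_kIndex (by omega) (by omega)).le hbelow
  rw [h.iterate_add_two_half hm] at hnonneg
  linarith

theorem escapeGap_mul_pow_le_rpow (h : EscapeRegime s₁ s₂ p q r a) (hθ : θ < 1)
    (hn : ((n + 2 : ℕ) : ℝ) ≤ θ * kIndex s₁ s₂ p q r a) :
    escapeGap s₁ s₂ p q r a * (s₁ + p * a) ^ n ≤ escapeGap s₁ s₂ p q r a ^ (1 - θ) := by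
  have hθ₀ : 0 < θ :=
    pos_of_mul_pos_left ((Nat.cast_pos.2 (n + 1).succ_pos).trans_le hn) (Nat.cast_nonneg _)
  have hnk : n + 2 < kIndex s₁ s₂ p q r a := lt_of_cast_le_mul_cast (n + 1).succ_pos hθ hn
  obtain ⟨m, hm⟩ := Nat.exists_eq_add_of_le' (show 3 ≤ kIndex s₁ s₂ p q r a by omega)
  have hnm : (n : ℝ) ≤ θ * (m + 1 : ℕ) := by
    rw [hm] at hn
    push_cast at hn ⊢
    linarith
  exact mul_pow_le_rpow_one_sub_of_mul_pow_le_one h.escapeGap_nonneg h.one_lt_leftSlope.le hθ₀.le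
    hnm (h.escapeGap_mul_pow_le_one hm.ge)

theorem abs_iterate_half_sub_half_le (h : EscapeRegime s₁ s₂ p q r a) (hθ : θ < 1)
    (hn : (n : ℝ) ≤ θ * kIndex s₁ s₂ p q r a) :
    |(Wmap s₁ s₂ p q r a)^[n] (1 / 2) - 1 / 2| ≤
      r * a + r * a / (s₁ + p * a - 1) + escapeGap s₁ s₂ p q r a ^ (1 - θ) := by
  have hρ := h.shift_pos
  have hfix : 0 < r * a / (s₁ + p * a - 1) := div_pos hρ (sub_pos.2 h.one_lt_leftSlope)
  have hrpow : 0 ≤ escapeGap s₁ s₂ p q r a ^ (1 - θ) := Real.rpow_nonneg h.escapeGap_nonneg _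
  match n with
  | 0 =>
    rw [Function.iterate_zero_apply, sub_self, abs_zero]
    linarith
  | 1 =>
    rw [Function.iterate_one, Wmap_half (zero_lt_one.trans h.one_lt_leftSlope) h.rightSlope_pos
      hρ.le, add_sub_cancel_left, abs_of_pos hρ]
    linarith
  | n + 2 =>
    have hnk : n + 2 < kIndex s₁ s₂ p q r a := lt_of_cast_le_mul_cast (n + 1).succ_pos hθ hn
    have hpow := h.escapeGap_mul_pow_le_rpow hθ hn
    have hpow₀ := h.escapeGap_mul_pow_nonneg n
    rw [h.iterate_add_two_half hnk.le, leftFixedPoint, abs_le]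
    constructor <;> linarith

end EscapeRegime

end Orbit

section Limit

variable {s₁ s₂ p q r θ : ℝ}

variable (s₂ p q r) in
theorem tendsto_escapeGap_zero (hs₁ : s₁ ≠ 1) :
    Tendsto (escapeGap s₁ s₂ p q r) (𝓝 0) (𝓝 0) := by
  have hne : s₁ + p * 0 - 1 ≠ 0 := by simpa [sub_eq_zero] using hs₁
  have hcont : ContinuousAt (escapeGap s₁ s₂ p q r) 0 := by
    unfold escapeGap
    fun_prop (disch := exact hne)
  simpa [escapeGap] using hcont.tendsto

variable (s₂ p q r) in
theorem tendsto_mul_add_div_add_escapeGap_rpow_zero (hs₁ : s₁ ≠ 1) (hθ : θ < 1) :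
    Tendsto (fun a => r * a + r * a / (s₁ + p * a - 1) + escapeGap s₁ s₂ p q r a ^ (1 - θ))
      (𝓝 0) (𝓝 0) := by
  have hne : s₁ + p * 0 - 1 ≠ 0 := by simpa [sub_eq_zero] using hs₁
  have hcont : ContinuousAt (fun a : ℝ => r * a + r * a / (s₁ + p * a - 1)) 0 := by
    fun_prop (disch := exact hne)
  have hrpow := (tendsto_escapeGap_zero s₂ p q r hs₁).rpow_const
    (Or.inr (sub_nonneg.2 hθ.le))
  simpa [Real.zero_rpow (sub_pos.2 hθ).ne'] using hcont.tendsto.add hrpow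

theorem eventually_mul_lt_half_add_mul_div (hs₂ : 0 < s₂) :
    ∀ᶠ a in 𝓝 (0 : ℝ), r * a < (1 / 2 + r * a) / (s₂ + q * a) := by
  have hne : s₂ + q * 0 ≠ 0 := by simpa using hs₂.ne'
  have hcont : ContinuousAt (fun a : ℝ => (1 / 2 + r * a) / (s₂ + q * a)) 0 := by
    fun_prop (disch := exact hne)
  exact (by fun_prop : ContinuousAt (fun a : ℝ => r * a) 0).eventually_lt hcont
    (by simpa using hs₂)

theorem eventually_lt_add_mul {s t : ℝ} (p : ℝ) (h : t < s) : ∀ᶠ a in 𝓝 (0 : ℝ), t < s + p * a :=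
  (by fun_prop : ContinuousAt (fun a : ℝ => s + p * a) 0).eventually_const_lt (by simpa using h)

theorem eventually_one_div_add_one_div_lt_one (hs₁ : s₁ ≠ 0) (hs₂ : s₂ ≠ 0)
    (hsum : 1 / s₁ + 1 / s₂ < 1) :
    ∀ᶠ a in 𝓝 (0 : ℝ), 1 / (s₁ + p * a) + 1 / (s₂ + q * a) < 1 := by
  have hne₁ : s₁ + p * 0 ≠ 0 := by simpa using hs₁
  have hne₂ : s₂ + q * 0 ≠ 0 := by simpa using hs₂
  have hcont : ContinuousAt (fun a : ℝ => 1 / (s₁ + p * a) + 1 / (s₂ + q * a)) 0 := by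
    fun_prop (disch := first | exact hne₁ | exact hne₂)
  exact hcont.eventually_lt_const (by simpa using hsum)

theorem eventually_escapeRegime (hs₁ : 1 < s₁) (hs₂ : 0 < s₂) (hr : 0 < r)
    (hsum : ∀ᶠ a in 𝓝[>] (0 : ℝ), 1 / (s₁ + p * a) + 1 / (s₂ + q * a) < 1) :
    ∀ᶠ a in 𝓝[>] (0 : ℝ), EscapeRegime s₁ s₂ p q r a := by
  filter_upwards [self_mem_nhdsWithin, hsum,
    nhdsWithin_le_nhds (eventually_lt_add_mul p hs₁),
    nhdsWithin_le_nhds (eventually_lt_add_mul q hs₂),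
    nhdsWithin_le_nhds (eventually_mul_lt_half_add_mul_div hs₂)]
    with a ha hsum_a hσ hτ hsmall
  exact ⟨hσ, hτ, mul_pos hr ha, hsum_a.le, hsmall⟩

/-- `hsum` also admits the critical case `1/s₁ + 1/s₂ = 1`, e.g. when `p` and `q` are positive. -/
theorem Wmap_iterate_k1_tendsto_half_lt_one_general {n : ℝ → ℕ} (hs₁ : 1 < s₁) (hs₂ : 0 < s₂)
    (hr : 0 < r) (hsum : ∀ᶠ a in 𝓝[>] (0 : ℝ), 1 / (s₁ + p * a) + 1 / (s₂ + q * a) < 1)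
    (hθ : θ < 1) (hn : ∀ᶠ a in 𝓝[>] (0 : ℝ), (n a : ℝ) ≤ θ * kIndex s₁ s₂ p q r a) :
    Tendsto (fun a => (Wmap s₁ s₂ p q r a)^[n a] (1 / 2)) (𝓝[>] (0 : ℝ)) (𝓝 (1 / 2)) := by
  rw [tendsto_iff_dist_tendsto_zero]
  refine squeeze_zero' (Eventually.of_forall fun _ => dist_nonneg) ?_
    ((tendsto_mul_add_div_add_escapeGap_rpow_zero s₂ p q r hs₁.ne' hθ).mono_left
      nhdsWithin_le_nhds)
  filter_upwards [eventually_escapeRegime hs₁ hs₂ hr hsum, hn] with a h hn_a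
  exact h.abs_iterate_half_sub_half_le hθ hn_a

end Limit

/-- Lemma 5(IV): if `1/s₁ + 1/s₂ < 1`, then `W_a^{k₁(a)}(1/2) → 1/2` as `a → 0⁺`,
where `k₁(a) = ⌊2k(a)/3⌋`. -/
theorem Wmap_iterate_k1_tendsto_half_lt_one
    (s₁ s₂ p q r : ℝ) (hs₁ : 1 < s₁) (hs₂ : 1 < s₂)
    (hp : 0 < p) (hq : 0 < q) (hr : 0 < r)
    (hsum : 1/s₁ + 1/s₂ < 1) :
    Tendsto (fun a => (Wmap s₁ s₂ p q r a)^[kIndex1 s₁ s₂ p q r a] (1/2))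
      (𝓝[>] (0:ℝ)) (𝓝 (1/2)) := by
  exact Wmap_iterate_k1_tendsto_half_lt_one_general hs₁ (by linarith) hr
    (nhdsWithin_le_nhds (eventually_one_div_add_one_div_lt_one (by linarith) (by linarith) hsum))
    (by norm_num) (Eventually.of_forall fun _ => kIndex1_le_two_thirds_mul_kIndex)
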